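/- arXiv:math/0501097 — 3 statements merged into one kernel-verified Lean document; each statement's English description precedes it below -/
import Mathlib

section
/- Let K be a field of characteristic zero and A a nonassociative K-algebra satisfying (x·y)·z − x·(y·z) = (z·y)·x − z·(y·x) for all x,y,z ∈ A (the G₄-associativity identity). Then A is Lie-admissible: the commutator bracket [x,y] = x·y − y·x satisfies the Jacobi identity [[x,y],z] + [[y,z],x] + [[z,x],y] = 0 for all x,y,z ∈ A. -/
/-!
Lie-admissibility says that the associator has equal sums over the even and over the odd
permutations of its three arguments. The swap of the outer two arguments is odd, so it exchanges
the two sums, and `G₄`-associativity says that the associator is invariant under it.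
-/

/-- A nonassociative ring is `G₄`-associative if its associator is invariant under the
permutation group `G₄ = {id, (1 3)}` of its three arguments. -/
def IsG4Associative (A : Type*) [NonUnitalNonAssocRing A] : Prop :=
  ∀ x y z : A, associator x y z = associator z y x

/-- The Lie-admissible structure on a `G₄`-associative ring, with the given ring operations, so
that the commutator bracket becomes that of a Lie ring. -/
abbrev IsG4Associative.lieAdmissibleRing {A : Type*} [NonUnitalNonAssocRing A]
    (h : IsG4Associative A) : LieAdmissibleRing A where
  assoc_def x y z := by
    rw [h x y z, h z x y, h y z x]
    abel

theorem lie_lie_jacobi {L : Type*} [LieRing L] (x y z : L) :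
    ⁅⁅x, y⁆, z⁆ + ⁅⁅y, z⁆, x⁆ + ⁅⁅z, x⁆, y⁆ = 0 := by
  rw [← lie_skew ⁅x, y⁆ z, ← lie_skew ⁅y, z⁆ x, ← lie_skew ⁅z, x⁆ y, ← neg_add, ← neg_add,
    neg_eq_zero]
  exact lie_jacobi z x y

theorem g4_associative_lie_admissible_general {A : Type*} [NonUnitalNonAssocRing A]
    (h : IsG4Associative A) (x y z : A) :
    ⁅⁅x, y⁆, z⁆ + ⁅⁅y, z⁆, x⁆ + ⁅⁅z, x⁆, y⁆ = 0 :=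
  letI := h.lieAdmissibleRing
  lie_lie_jacobi x y z

/-- Every `G₄`-associative algebra over a field of characteristic zero,
i.e. satisfying `(x·y)·z − x·(y·z) = (z·y)·x − z·(y·x)`, is Lie-admissible: the
commutator bracket satisfies the Jacobi identity. -/
theorem g4_associative_lie_admissible
    (K : Type*) [Field K] [CharZero K]
    (A : Type*) [NonUnitalNonAssocRing A] [Module K A]
    [SMulCommClass K A A] [IsScalarTower K A A]
    (h : ∀ x y z : A, (x * y) * z - x * (y * z) = (z * y) * x - z * (y * x)) :
    ∀ x y z : A,
      ((x * y - y * x) * z - z * (x * y - y * x))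
        + ((y * z - z * y) * x - x * (y * z - z * y))
        + ((z * x - x * z) * y - y * (z * x - x * z)) = 0 :=
  g4_associative_lie_admissible_general h
end

section
/- Let K be a field of characteristic zero, G a subgroup of Σ₃, and A a finite-dimensional G-associative K-algebra with multiplication viewed as a linear map μ : A⊗A → A. Define a comultiplication Δ : A* → A*⊗A* as the composition of the transpose μ* : A* → (A⊗A)* with the canonical isomorphism (A⊗A)* ≅ A*⊗A* (which exists since A is finite-dimensional); equivalently, for a basis (e₁,…,eₙ) of A with dual basis (f₁,…,fₙ), Δ(f) = Σ_{i,j} f(eᵢ·eⱼ) fᵢ⊗fⱼ. Then (A*, Δ) is a G-cogebra: Σ_{σ∈G} ε(σ) Φ_σ∘(Δ⊗Id)∘Δ = Σ_{σ∈G} ε(σ) Φ_σ∘(Id⊗Δ)∘Δ as linear maps A* → A*⊗A*⊗A*. -/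
open TensorProduct

set_option synthInstance.maxHeartbeats 1000000
set_option maxHeartbeats 1000000

/-!
Since `A` is finite and free, a tensor in `A* ⊗ A* ⊗ A*` is determined by its values on pure tensors
`a ⊗ b ⊗ c`. Under this pairing the two iterated coproducts of `f` become `f ((a * b) * c)` and
`f (a * (b * c))`, so their difference becomes `f` of the associator of `a`, `b`, `c`, and `Φ σ`
becomes the permutation of the arguments by `σ`. Hence the cogebra identity evaluated at
`a ⊗ b ⊗ c` is `f` applied to the `G`-associativity identity, reindexed by `σ ↦ σ⁻¹`.
-/

section

open Module (Dual)

section TripleDualDistrib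

variable (R M N P : Type*) [CommSemiring R] [AddCommMonoid M] [AddCommMonoid N]
  [AddCommMonoid P] [Module R M] [Module R N] [Module R P]

/-- The canonical map `(M* ⊗ N*) ⊗ P* → ((M ⊗ N) ⊗ P)*`, the threefold analogue of
`TensorProduct.dualDistrib`. It pairs triple tensors of functionals with triple tensors of
vectors. -/
noncomputable def tripleDualDistrib :
    (Dual R M ⊗[R] Dual R N) ⊗[R] Dual R P →ₗ[R] Dual R ((M ⊗[R] N) ⊗[R] P) :=
  dualDistrib R (M ⊗[R] N) P ∘ₗ (dualDistrib R M N).rTensor (Dual R P)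

theorem tripleDualDistrib_injective [Module.Free R M] [Module.Finite R M] [Module.Free R N]
    [Module.Finite R N] [Module.Free R P] [Module.Finite R P] :
    Function.Injective (tripleDualDistrib R M N P) :=
  (dualDistribEquiv R (M ⊗[R] N) P).injective.comp
    ((dualDistribEquiv R M N).rTensor (Dual R P)).injective

variable {R M N P}

theorem tripleDualDistrib_tmul_apply (s : Dual R M ⊗[R] Dual R N) (h : Dual R P)
    (a : M) (b : N) (c : P) :
    tripleDualDistrib R M N P (s ⊗ₜ h) ((a ⊗ₜ b) ⊗ₜ c) =
      dualDistrib R M N s (a ⊗ₜ b) * h c :=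
  rfl

theorem tripleDualDistrib_assoc_symm_tmul_apply (f : Dual R M) (s : Dual R N ⊗[R] Dual R P)
    (a : M) (b : N) (c : P) :
    tripleDualDistrib R M N P ((TensorProduct.assoc R _ _ _).symm (f ⊗ₜ s))
      ((a ⊗ₜ b) ⊗ₜ c) = f a * dualDistrib R N P s (b ⊗ₜ c) := by
  induction s with
  | zero => simp
  | tmul g h => simp [tripleDualDistrib_tmul_apply, mul_assoc]
  | add s t hs ht => simp [tmul_add, hs, ht, mul_add]

theorem tripleDualDistrib_tmul_apply_eq_prod (f : Fin 3 → Dual R M) (x : Fin 3 → M) :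
    tripleDualDistrib R M M M ((f 0 ⊗ₜ f 1) ⊗ₜ f 2) ((x 0 ⊗ₜ x 1) ⊗ₜ x 2) =
      ∏ i, f i (x i) := by
  rw [tripleDualDistrib_tmul_apply, dualDistrib_apply, Fin.prod_univ_three]

theorem tripleDualDistrib_perm_apply {σ : Equiv.Perm (Fin 3)}
    {φ : (Dual R M ⊗[R] Dual R M) ⊗[R] Dual R M →ₗ[R]
      (Dual R M ⊗[R] Dual R M) ⊗[R] Dual R M}
    (hφ : ∀ f : Fin 3 → Dual R M,
      φ ((f 0 ⊗ₜ f 1) ⊗ₜ f 2) = (f (σ⁻¹ 0) ⊗ₜ f (σ⁻¹ 1)) ⊗ₜ f (σ⁻¹ 2))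
    (t : (Dual R M ⊗[R] Dual R M) ⊗[R] Dual R M) (x : Fin 3 → M) :
    tripleDualDistrib R M M M (φ t) ((x 0 ⊗ₜ x 1) ⊗ₜ x 2) =
      tripleDualDistrib R M M M t ((x (σ 0) ⊗ₜ x (σ 1)) ⊗ₜ x (σ 2)) := by
  have on_pure_tensors (f : Fin 3 → Dual R M) :
      tripleDualDistrib R M M M (φ ((f 0 ⊗ₜ f 1) ⊗ₜ f 2)) ((x 0 ⊗ₜ x 1) ⊗ₜ x 2) =
        tripleDualDistrib R M M M ((f 0 ⊗ₜ f 1) ⊗ₜ f 2)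
          ((x (σ 0) ⊗ₜ x (σ 1)) ⊗ₜ x (σ 2)) :=
    calc
      _ = ∏ i, f (σ⁻¹ i) (x i) := by
        rw [hφ]; exact tripleDualDistrib_tmul_apply_eq_prod (fun i ↦ f (σ⁻¹ i)) x
      _ = ∏ i, f i (x (σ i)) := by
        simpa using (Equiv.prod_comp σ fun i ↦ f (σ⁻¹ i) (x i)).symm
      _ = _ := (tripleDualDistrib_tmul_apply_eq_prod f (x ∘ σ)).symm
  have as_linear_maps :
      (tripleDualDistrib R M M M ∘ₗ φ).flip ((x 0 ⊗ₜ x 1) ⊗ₜ x 2) =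
        (tripleDualDistrib R M M M).flip ((x (σ 0) ⊗ₜ x (σ 1)) ⊗ₜ x (σ 2)) :=
    ext_threefold fun f g h ↦ on_pure_tensors ![f, g, h]
  exact LinearMap.congr_fun as_linear_maps t

end TripleDualDistrib

section DualComul

variable (R A : Type*) [CommSemiring R] [NonUnitalNonAssocSemiring A] [Module R A]
  [SMulCommClass R A A] [IsScalarTower R A A] [Module.Free R A] [Module.Finite R A]

/-- The comultiplication on `A*` dual to the multiplication of `A`: the transpose
`A* → (A ⊗ A)*` followed by the inverse of the canonical isomorphism `A* ⊗ A* ≃ (A ⊗ A)*`. -/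
noncomputable def dualComul : Dual R A →ₗ[R] Dual R A ⊗[R] Dual R A :=
  (dualDistribEquiv R A A).symm.toLinearMap ∘ₗ (LinearMap.mul' R A).dualMap

variable {R A}

theorem dualDistrib_dualComul_apply (f : Dual R A) (a b : A) :
    dualDistrib R A A (dualComul R A f) (a ⊗ₜ b) = f (a * b) :=
  LinearMap.congr_fun ((dualDistribEquiv R A A).apply_symm_apply _) (a ⊗ₜ b)

theorem tripleDualDistrib_map_dualComul_id_apply (t : Dual R A ⊗[R] Dual R A) (a b c : A) :
    tripleDualDistrib R A A A (TensorProduct.map (dualComul R A) LinearMap.id t)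
      ((a ⊗ₜ b) ⊗ₜ c) = dualDistrib R A A t ((a * b) ⊗ₜ c) := by
  induction t with
  | zero => simp
  | tmul f g => simp [tripleDualDistrib_tmul_apply, dualDistrib_dualComul_apply]
  | add s t hs ht => simp [hs, ht]

theorem tripleDualDistrib_assoc_symm_map_id_dualComul_apply (t : Dual R A ⊗[R] Dual R A)
    (a b c : A) :
    tripleDualDistrib R A A A ((TensorProduct.assoc R _ _ _).symm
      (TensorProduct.map LinearMap.id (dualComul R A) t)) ((a ⊗ₜ b) ⊗ₜ c) =
      dualDistrib R A A t (a ⊗ₜ (b * c)) := by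
  induction t with
  | zero => simp
  | tmul f g => simp [tripleDualDistrib_assoc_symm_tmul_apply, dualDistrib_dualComul_apply]
  | add s t hs ht => simp [hs, ht]

end DualComul

/-- `A` is `G`-associative if the signed sum over `G` of its permuted associators vanishes. Sending
`x` to `x ∘ σ⁻¹` is the convention making `σ` a left action on triples. -/
def IsGAssociative (G : Subgroup (Equiv.Perm (Fin 3))) [Fintype G]
    (A : Type*) [NonUnitalNonAssocRing A] : Prop :=
  ∀ x : Fin 3 → A,
    ∑ σ : G, (Equiv.Perm.sign (σ : Equiv.Perm (Fin 3)) : ℤ) •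
      associator (x ((σ : Equiv.Perm (Fin 3))⁻¹ 0)) (x ((σ : Equiv.Perm (Fin 3))⁻¹ 1))
        (x ((σ : Equiv.Perm (Fin 3))⁻¹ 2)) = 0

theorem IsGAssociative.sum_sign_smul_mul_mul {G : Subgroup (Equiv.Perm (Fin 3))} [Fintype G]
    {A : Type*} [NonUnitalNonAssocRing A] (hA : IsGAssociative G A) (x : Fin 3 → A) :
    ∑ σ : G, (Equiv.Perm.sign (σ : Equiv.Perm (Fin 3)) : ℤ) •
        (x (σ.1 0) * x (σ.1 1) * x (σ.1 2)) =
      ∑ σ : G, (Equiv.Perm.sign (σ : Equiv.Perm (Fin 3)) : ℤ) •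
        (x (σ.1 0) * (x (σ.1 1) * x (σ.1 2))) := by
  rw [← sub_eq_zero, ← Finset.sum_sub_distrib, ← hA x, ← Equiv.sum_comp (Equiv.inv G)]
  simp only [Equiv.inv_apply, InvMemClass.coe_inv, Equiv.Perm.sign_inv, associator, smul_sub]

theorem dual_of_g_associative_is_g_cogebra_general
    (R : Type*) [CommRing R]
    (G : Subgroup (Equiv.Perm (Fin 3))) [Fintype G]
    (A : Type*) [NonUnitalNonAssocRing A] [Module R A]
    [SMulCommClass R A A] [IsScalarTower R A A] [Module.Free R A] [Module.Finite R A]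
    (hA : IsGAssociative G A)
    (Φ : Equiv.Perm (Fin 3) →
      ((Dual R A ⊗[R] Dual R A) ⊗[R] Dual R A →ₗ[R] (Dual R A ⊗[R] Dual R A) ⊗[R] Dual R A))
    (hΦ : ∀ (σ : Equiv.Perm (Fin 3)) (f : Fin 3 → Dual R A),
      Φ σ ((f 0 ⊗ₜ f 1) ⊗ₜ f 2) = (f (σ⁻¹ 0) ⊗ₜ f (σ⁻¹ 1)) ⊗ₜ f (σ⁻¹ 2)) :
    ∑ σ : G, (Equiv.Perm.sign (σ : Equiv.Perm (Fin 3)) : ℤ) •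
        (Φ σ ∘ₗ TensorProduct.map (dualComul R A) LinearMap.id ∘ₗ dualComul R A) =
      ∑ σ : G, (Equiv.Perm.sign (σ : Equiv.Perm (Fin 3)) : ℤ) •
        (Φ σ ∘ₗ (TensorProduct.assoc R (Dual R A) (Dual R A) (Dual R A)).symm.toLinearMap ∘ₗ
          TensorProduct.map LinearMap.id (dualComul R A) ∘ₗ dualComul R A) := by
  ext1 f
  refine tripleDualDistrib_injective R A A A (ext_threefold fun a b c ↦ ?_)
  have pairing_sum_apply
      (D : Dual R A →ₗ[R] (Dual R A ⊗[R] Dual R A) ⊗[R] Dual R A) (x : Fin 3 → A) :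
      tripleDualDistrib R A A A
          ((∑ σ : G, (Equiv.Perm.sign (σ : Equiv.Perm (Fin 3)) : ℤ) • (Φ σ ∘ₗ D)) f)
          ((x 0 ⊗ₜ x 1) ⊗ₜ x 2) =
        ∑ σ : G, (Equiv.Perm.sign (σ : Equiv.Perm (Fin 3)) : ℤ) •
          tripleDualDistrib R A A A (D f) ((x (σ.1 0) ⊗ₜ x (σ.1 1)) ⊗ₜ x (σ.1 2)) := by
    simp only [LinearMap.sum_apply, LinearMap.smul_apply, LinearMap.comp_apply, map_sum,
      LinearMap.map_smul_of_tower, tripleDualDistrib_perm_apply (hΦ _)]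
  let x : Fin 3 → A := ![a, b, c]
  calc
    _ = ∑ σ : G, (Equiv.Perm.sign (σ : Equiv.Perm (Fin 3)) : ℤ) •
          f (x (σ.1 0) * x (σ.1 1) * x (σ.1 2)) := by
      refine (pairing_sum_apply _ x).trans ?_
      simp only [LinearMap.comp_apply, tripleDualDistrib_map_dualComul_id_apply,
        dualDistrib_dualComul_apply]
    _ = ∑ σ : G, (Equiv.Perm.sign (σ : Equiv.Perm (Fin 3)) : ℤ) •
          f (x (σ.1 0) * (x (σ.1 1) * x (σ.1 2))) := by
      simpa only [map_sum, map_zsmul] using congrArg f (hA.sum_sign_smul_mul_mul x)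
    _ = _ := by
      refine Eq.trans ?_ (pairing_sum_apply _ x).symm
      simp only [LinearMap.comp_apply, LinearEquiv.coe_coe, dualDistrib_dualComul_apply,
        tripleDualDistrib_assoc_symm_map_id_dualComul_apply]

end

/-- The dual space of a finite-dimensional `G`-associative algebra `A`
carries a `G`-cogebra structure, where the comultiplication `Δ` on `A*` is the transpose
of the multiplication `μ : A ⊗ A → A` composed with the canonical isomorphism
`(A ⊗ A)* ≅ A* ⊗ A*`. Here `Φ σ` denotes the permutation operator on the triple tensor
product of `A*` with `Φ σ (x₁⊗x₂⊗x₃) = x_{σ⁻¹(1)} ⊗ x_{σ⁻¹(2)} ⊗ x_{σ⁻¹(3)}`. -/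
theorem dual_of_g_associative_is_g_cogebra
    (K : Type*) [Field K] [CharZero K]
    (G : Subgroup (Equiv.Perm (Fin 3))) [DecidablePred (· ∈ G)]
    (A : Type*) [NonUnitalNonAssocRing A] [Module K A]
    [SMulCommClass K A A] [IsScalarTower K A A] [FiniteDimensional K A]
    (hA : ∀ x : Fin 3 → A,
      ∑ σ : G,
        (Equiv.Perm.sign (σ : Equiv.Perm (Fin 3)) : ℤ) •
          ((x ((σ : Equiv.Perm (Fin 3))⁻¹ 0) * x ((σ : Equiv.Perm (Fin 3))⁻¹ 1))
              * x ((σ : Equiv.Perm (Fin 3))⁻¹ 2)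
            - x ((σ : Equiv.Perm (Fin 3))⁻¹ 0)
              * (x ((σ : Equiv.Perm (Fin 3))⁻¹ 1) * x ((σ : Equiv.Perm (Fin 3))⁻¹ 2))) = 0)
    (Δ : Module.Dual K A →ₗ[K] Module.Dual K A ⊗[K] Module.Dual K A)
    (hΔ : Δ = (TensorProduct.dualDistribEquiv K A A).symm.toLinearMap
        ∘ₗ (LinearMap.mul' K A).dualMap)
    (Φ : Equiv.Perm (Fin 3) →
      ((Module.Dual K A ⊗[K] Module.Dual K A) ⊗[K] Module.Dual K A →ₗ[K]
        (Module.Dual K A ⊗[K] Module.Dual K A) ⊗[K] Module.Dual K A))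
    (hΦ : ∀ (σ : Equiv.Perm (Fin 3)) (x : Fin 3 → Module.Dual K A),
      Φ σ ((x 0 ⊗ₜ[K] x 1) ⊗ₜ[K] x 2) = (x (σ⁻¹ 0) ⊗ₜ[K] x (σ⁻¹ 1)) ⊗ₜ[K] x (σ⁻¹ 2)) :
    ∑ σ : G,
        (Equiv.Perm.sign (σ : Equiv.Perm (Fin 3)) : ℤ) •
          (Φ σ ∘ₗ TensorProduct.map Δ LinearMap.id ∘ₗ Δ)
      = ∑ σ : G,
        (Equiv.Perm.sign (σ : Equiv.Perm (Fin 3)) : ℤ) •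
          (Φ σ ∘ₗ (TensorProduct.assoc K (Module.Dual K A) (Module.Dual K A)
              (Module.Dual K A)).symm.toLinearMap
            ∘ₗ TensorProduct.map LinearMap.id Δ ∘ₗ Δ) := by
  subst hΔ
  exact dual_of_g_associative_is_g_cogebra_general K G A hA Φ hΦ
end

section
/- Let K be a field of characteristic zero, A a Vinberg algebra over K, i.e. (x·y)·z − x·(y·z) = (y·x)·z − y·(x·z) for all x,y,z ∈ A, and B an associative K-algebra satisfying (y₁·y₂)·y₃ = (y₂·y₁)·y₃ for all y₁,y₂,y₃ ∈ B. Then the tensor product A⊗B, with multiplication (a₁⊗b₁)·(a₂⊗b₂) = (a₁·a₂)⊗(b₁·b₂), is a Vinberg algebra: (u₁·u₂)·u₃ − u₁·(u₂·u₃) = (u₂·u₁)·u₃ − u₂·(u₁·u₃) for all u₁,u₂,u₃ ∈ A⊗B. -/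
open TensorProduct

/-!
The Vinberg identity says that the associator is symmetric in its first two arguments. Since `B` is
associative, the associator of pure tensors factors as the associator in `A` tensored with a product
in `B`, and both factors have this symmetry. The associator is additive in each argument, so pure
tensors suffice.
-/

section Ext

variable {R M N P : Type*} [CommSemiring R] [AddCommMonoid M] [Module R M]
  [AddCommMonoid N] [Module R N] [AddZeroClass P]

theorem addMonoidHom_ext_tmul {f g : M ⊗[R] N →+ P}
    (h : ∀ m n, f (m ⊗ₜ n) = g (m ⊗ₜ n)) : f = g :=
  DFunLike.ext f g fun u ↦ by
    induction u with
    | zero => rw [map_zero, map_zero]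
    | tmul m n => exact h m n
    | add u v hu hv => rw [map_add, map_add, hu, hv]

end Ext

section Associator

variable {R A B : Type*} [CommSemiring R]
  [NonUnitalNonAssocRing A] [Module R A] [SMulCommClass R A A] [IsScalarTower R A A]

theorem associator_left_symm_of_tmul
    [NonUnitalNonAssocSemiring B] [Module R B] [SMulCommClass R B B] [IsScalarTower R B B]
    (h : ∀ (a₁ a₂ a₃ : A) (b₁ b₂ b₃ : B),
      associator (a₁ ⊗ₜ[R] b₁) (a₂ ⊗ₜ b₂) (a₃ ⊗ₜ b₃) =
        associator (a₂ ⊗ₜ b₂) (a₁ ⊗ₜ b₁) (a₃ ⊗ₜ b₃))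
    (u₁ u₂ u₃ : A ⊗[R] B) : associator u₁ u₂ u₃ = associator u₂ u₁ u₃ := by
  suffices AddMonoidHom.associator (R := A ⊗[R] B) = AddMonoidHom.associator.flip from
    DFunLike.congr_fun (DFunLike.congr_fun (DFunLike.congr_fun this u₁) u₂) u₃
  exact addMonoidHom_ext_tmul fun a₁ b₁ ↦ addMonoidHom_ext_tmul fun a₂ b₂ ↦
    addMonoidHom_ext_tmul fun a₃ b₃ ↦ h a₁ a₂ a₃ b₁ b₂ b₃

variable [NonUnitalSemiring B] [Module R B] [SMulCommClass R B B] [IsScalarTower R B B]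

theorem associator_tmul (a₁ a₂ a₃ : A) (b₁ b₂ b₃ : B) :
    associator (a₁ ⊗ₜ[R] b₁) (a₂ ⊗ₜ b₂) (a₃ ⊗ₜ b₃) =
      associator a₁ a₂ a₃ ⊗ₜ (b₁ * b₂ * b₃) := by
  simp only [associator_apply, Algebra.TensorProduct.tmul_mul_tmul, sub_tmul, mul_assoc]

theorem tensor_vinberg_with_g2_shriek_general
    (hA : ∀ x y z : A, associator x y z = associator y x z)
    (hB : ∀ y₁ y₂ y₃ : B, y₁ * y₂ * y₃ = y₂ * y₁ * y₃) (u₁ u₂ u₃ : A ⊗[R] B) :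
    associator u₁ u₂ u₃ = associator u₂ u₁ u₃ :=
  associator_left_symm_of_tmul
    (fun a₁ a₂ a₃ b₁ b₂ b₃ ↦ by rw [associator_tmul, associator_tmul, hA, hB]) u₁ u₂ u₃

end Associator

/-- If `A` is a Vinberg algebra and `B` an associative algebra with
`(y₁·y₂)·y₃ = (y₂·y₁)·y₃` (a `G₂^!`-algebra), then the tensor product `A ⊗ B`, with
multiplication `(a₁⊗b₁)·(a₂⊗b₂) = (a₁·a₂)⊗(b₁·b₂)`, is a Vinberg algebra. -/
theorem tensor_vinberg_with_g2_shriek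
    (K : Type*) [Field K] [CharZero K]
    (A : Type*) [NonUnitalNonAssocRing A] [Module K A]
    [SMulCommClass K A A] [IsScalarTower K A A]
    (B : Type*) [NonUnitalRing B] [Module K B]
    [SMulCommClass K B B] [IsScalarTower K B B]
    (hA : ∀ x y z : A, (x * y) * z - x * (y * z) = (y * x) * z - y * (x * z))
    (hB : ∀ y₁ y₂ y₃ : B, (y₁ * y₂) * y₃ = (y₂ * y₁) * y₃) :
    ∀ u₁ u₂ u₃ : A ⊗[K] B,
      (u₁ * u₂) * u₃ - u₁ * (u₂ * u₃) = (u₂ * u₁) * u₃ - u₂ * (u₁ * u₃) :=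
  tensor_vinberg_with_g2_shriek_general hA hB
end
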